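/- Consider an MDP congestion game in which each feasible set 𝒳(P^i, z₀^i) is nonempty, and whose cost vector ξ is continuously differentiable on a convex open set U containing D = ∏_i 𝒳(P^i, z₀^i) with Jacobian Dξ(x) symmetric positive definite for every x ∈ U. Then the game has exactly one Nash equilibrium. -/

import Mathlib

open Finset

/-- The feasible set 𝒳(P, z₀) of state-action distributions. -/
def Feas {S A : Type*} [Fintype S] [Fintype A] (T : ℕ)
    (P : Fin (T+1) → S → S → A → ℝ) (z0 : S → ℝ) :
    Set (Fin (T+1) → S → A → ℝ) :=
  {x | (∀ t s a, 0 ≤ x t s a) ∧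
    (∀ s, ∑ a, x 0 s a = z0 s) ∧
    ∀ (t : ℕ) (ht : t < T), ∀ s,
      ∑ s', ∑ a, P ⟨t+1, by omega⟩ s s' a * x ⟨t, by omega⟩ s' a
        = ∑ a, x ⟨t+1, by omega⟩ s a}

/-- `P` is a transition kernel: nonnegative, and column-stochastic for t ∈ {1,…,T}. -/
def IsKernel {S A : Type*} [Fintype S] (T : ℕ)
    (P : Fin (T+1) → S → S → A → ℝ) : Prop :=
  (∀ t s' s a, 0 ≤ P t s' s a) ∧
    ∀ t : Fin (T+1), t ≠ 0 → ∀ s a, ∑ s', P t s' s a = 1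

/-- Backwards recursion for Q-values: `Qaux T P c k` is the Q-value at time T - k. -/
noncomputable def Qaux {S A : Type*} [Fintype S] [Fintype A] [Nonempty A] (T : ℕ)
    (P : Fin (T+1) → S → S → A → ℝ) (c : Fin (T+1) → S → A → ℝ) : ℕ → S → A → ℝ
  | 0, s, a => c (Fin.last T) s a
  | k+1, s, a =>
    c ⟨T - (k+1), by omega⟩ s a +
      ∑ s', P ⟨T - k, by omega⟩ s' s a *
        Finset.univ.inf' Finset.univ_nonempty (Qaux T P c k s')

/-- Q-values: `Q(T,s,a) = c(T,s,a)`,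
`Q(t-1,s,a) = c(t-1,s,a) + ∑_{s'} P(t,s',s,a) · min_{a'} Q(t,s',a')`. -/
noncomputable def Qval {S A : Type*} [Fintype S] [Fintype A] [Nonempty A] (T : ℕ)
    (P : Fin (T+1) → S → S → A → ℝ) (c : Fin (T+1) → S → A → ℝ)
    (t : Fin (T+1)) : S → A → ℝ :=
  Qaux T P c (T - t.1)

/-- x satisfies the Bellman condition for costs c:
every state-action pair played with positive probability achieves the minimal Q-value. -/
def BellmanCond {S A : Type*} [Fintype S] [Fintype A] [Nonempty A] (T : ℕ)
    (P : Fin (T+1) → S → S → A → ℝ) (c : Fin (T+1) → S → A → ℝ)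
    (x : Fin (T+1) → S → A → ℝ) : Prop :=
  ∀ t s a, 0 < x t s a →
    Qval T P c t s a = Finset.univ.inf' Finset.univ_nonempty (Qval T P c t s)

/-- Standard basis vector of the space of state-action functions. -/
def eb {S A : Type*} [DecidableEq S] [DecidableEq A] (T : ℕ)
    (t : Fin (T+1)) (s : S) (a : A) : Fin (T+1) → S → A → ℝ :=
  fun t' s' a' => if t' = t ∧ s' = s ∧ a' = a then 1 else 0

/-- Standard basis vector of the joint (N-player) space. -/
def ebN {S A : Type*} [DecidableEq S] [DecidableEq A] (N T : ℕ)
    (i : Fin N) (t : Fin (T+1)) (s : S) (a : A) :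
    Fin N → Fin (T+1) → S → A → ℝ :=
  fun j => if j = i then eb T t s a else 0

/- A joint distribution is a Nash equilibrium iff each player minimises the expected cost with the
cost vector frozen at that distribution: expected cost equals the optimal value at time `0` plus the
nonnegative gap `Q - V` weighted by the distribution, and a greedy policy makes this gap vanish. So
the equilibria are the solutions of the variational inequality for `ξ` over the product of the
feasible sets. A symmetric Jacobian makes `ξ` a gradient, and a minimiser of its potential over that
compact convex product is a solution; positive definiteness makes `ξ` strictly monotone, whence
there is only one. -/

section VariationalInequality

variable {E : Type*} [NormedAddCommGroup E] [NormedSpace ℝ E] {D : Set E}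
  {F : E → StrongDual ℝ E} {F' : E → E →L[ℝ] StrongDual ℝ E} {x y : E}

/-- Solutions of the variational inequality `0 ≤ F x (y - x)` for all `y ∈ D`, encoded by linearity
as `x` minimising `F x` over `D`. -/
def IsVISolution (D : Set E) (F : E → StrongDual ℝ E) (x : E) : Prop :=
  x ∈ D ∧ IsMinOn (F x) D x

lemma IsVISolution.of_isMinOn {f : E → ℝ} (hD : Convex ℝ D) (hf : HasFDerivWithinAt f (F x) D x)
    (hx : x ∈ D) (hmin : IsMinOn f D x) : IsVISolution D F x := by
  refine ⟨hx, fun y hy => ?_⟩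
  have hnonneg : 0 ≤ F x (y - x) := hmin.localize.hasFDerivWithinAt_nonneg hf
    (sub_mem_posTangentConeAt_of_segment_subset (hD.segment_subset hx hy))
  rwa [map_sub, sub_nonneg] at hnonneg

lemma exists_isVISolution (hD : Convex ℝ D) (hcompact : IsCompact D) (hne : D.Nonempty)
    (hF : ∀ x ∈ D, HasFDerivWithinAt F (F' x) D x)
    (hsymm : ∀ x ∈ D, ∀ v w, F' x v w = F' x w v) : ∃ x, IsVISolution D F x := by
  obtain ⟨f, hf⟩ := hD.exists_forall_hasFDerivWithinAt_of_hasFDerivWithinAt_symmetric hF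
    fun x hx v _ w _ => hsymm x hx v w
  obtain ⟨x, hx, hmin⟩ := hcompact.exists_isMinOn hne fun x hx => (hf x hx).continuousWithinAt
  exact ⟨x, .of_isMinOn hD (hf x hx) hx hmin⟩

lemma apply_sub_lt_apply_sub (hD : Convex ℝ D) (hF : ∀ x ∈ D, HasFDerivWithinAt F (F' x) D x)
    (hpos : ∀ x ∈ D, ∀ v, v ≠ 0 → 0 < F' x v v) (hx : x ∈ D) (hy : y ∈ D) (hxy : x ≠ y) :
    F x (y - x) < F y (y - x) := by
  obtain ⟨z, hz, hslope⟩ := domain_mvt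
    (fun z hz => (hF z hz).clm_apply (hasFDerivWithinAt_const (y - x) z D)) hD hx hy
  have hderiv : 0 < F' z (y - x) (y - x) :=
    hpos z (hD.segment_subset hx hy hz) _ (sub_ne_zero.2 hxy.symm)
  simp only [ContinuousLinearMap.comp_zero, zero_add, ContinuousLinearMap.flip_apply] at hslope
  linarith

lemma IsVISolution.eq (hmono : ∀ x ∈ D, ∀ y ∈ D, x ≠ y → F x (y - x) < F y (y - x))
    (hx : IsVISolution D F x) (hy : IsVISolution D F y) : x = y := by
  by_contra hxy
  have hlt := hmono x hx.1 y hy.1 hxy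
  have hxle : F x x ≤ F x y := hx.2 hy.1
  have hyle : F y y ≤ F y x := hy.2 hx.1
  simp only [map_sub] at hlt
  linarith

theorem existsUnique_isVISolution (hD : Convex ℝ D) (hcompact : IsCompact D) (hne : D.Nonempty)
    (hF : ∀ x ∈ D, HasFDerivWithinAt F (F' x) D x)
    (hsymm : ∀ x ∈ D, ∀ v w, F' x v w = F' x w v)
    (hpos : ∀ x ∈ D, ∀ v, v ≠ 0 → 0 < F' x v v) : ∃! x, IsVISolution D F x :=
  existsUnique_of_exists_of_unique (exists_isVISolution hD hcompact hne hF hsymm)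
    fun _ _ => IsVISolution.eq fun _ hx _ hy => apply_sub_lt_apply_sub hD hF hpos hx hy

end VariationalInequality

lemma isMinOn_univ_pi_sum_iff {ι : Type*} [Fintype ι] {E : ι → Type*} {K : ∀ i, Set (E i)}
    {φ : ∀ i, E i → ℝ} {x : ∀ i, E i} (hx : x ∈ Set.univ.pi K) :
    IsMinOn (fun y => ∑ i, φ i (y i)) (Set.univ.pi K) x ↔ ∀ i, IsMinOn (φ i) (K i) (x i) := by
  classical
  refine ⟨fun hmin i => isMinOn_iff.2 fun y hy => ?_, fun hmin => isMinOn_iff.2 fun y hy =>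
    Finset.sum_le_sum fun i _ => hmin i (hy i (Set.mem_univ i))⟩
  have hupdate : Function.update x i y ∈ Set.univ.pi K := by
    rw [Set.update_mem_pi_iff_of_mem hx]
    exact fun _ => hy
  have hle : ∑ j, φ j (x j) ≤ ∑ j, φ j (Function.update x i y j) := hmin hupdate
  have hrest : ∑ j ∈ univ.erase i, φ j (Function.update x i y j)
      = ∑ j ∈ univ.erase i, φ j (x j) :=
    Finset.sum_congr rfl fun j hj => by rw [Function.update_of_ne (Finset.ne_of_mem_erase hj)]
  rw [← Finset.add_sum_erase _ _ (Finset.mem_univ i),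
    ← Finset.add_sum_erase _ (fun j => φ j (Function.update x i y j)) (Finset.mem_univ i),
    hrest, Function.update_self] at hle
  exact le_of_add_le_add_right hle

lemma ebN_eq_single {S A : Type*} [DecidableEq S] [DecidableEq A] {N T : ℕ}
    (i : Fin N) (t : Fin (T + 1)) (s : S) (a : A) :
    ebN N T i t s a = Pi.single i (Pi.single t (Pi.single s (Pi.single a 1))) := by
  ext i' t' s' a'
  simp [ebN, eb, Pi.single_apply, ite_apply, ite_and]

section ExpectedCost

variable {S A : Type*} [Fintype S] [Fintype A] {T : ℕ} {ι : Type*} [Fintype ι]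

/-- The pairing `⟨c, x⟩ = ∑ c(t,s,a) x(t,s,a)`: the cost of the state-action distribution `x` under
the cost function `c`. -/
noncomputable def expectedCost :
    (Fin (T + 1) → S → A → ℝ) →L[ℝ] StrongDual ℝ (Fin (T + 1) → S → A → ℝ) :=
  LinearMap.toContinuousBilinearMap <|
    LinearMap.mk₂ ℝ (fun c x => ∑ t, ∑ s, ∑ a, c t s a * x t s a)
      (by simp [add_mul, Finset.sum_add_distrib]) (by simp [Finset.mul_sum, mul_assoc])
      (by simp [mul_add, Finset.sum_add_distrib]) (by simp [Finset.mul_sum, mul_left_comm])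

lemma expectedCost_apply (c x : Fin (T + 1) → S → A → ℝ) :
    expectedCost c x = ∑ t, ∑ s, ∑ a, c t s a * x t s a := rfl

lemma expectedCost_nonneg {c x : Fin (T + 1) → S → A → ℝ} (hc : ∀ t s a, 0 ≤ c t s a)
    (hx : ∀ t s a, 0 ≤ x t s a) : 0 ≤ expectedCost c x := by
  rw [expectedCost_apply]
  exact Finset.sum_nonneg fun t _ => Finset.sum_nonneg fun s _ => Finset.sum_nonneg fun a _ =>
    mul_nonneg (hc t s a) (hx t s a)

lemma expectedCost_eq_zero_iff {c x : Fin (T + 1) → S → A → ℝ} (hc : ∀ t s a, 0 ≤ c t s a)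
    (hx : ∀ t s a, 0 ≤ x t s a) : expectedCost c x = 0 ↔ ∀ t s a, c t s a * x t s a = 0 := by
  simp only [expectedCost_apply, ← Fintype.sum_prod_type']
  rw [Finset.sum_eq_zero_iff_of_nonneg fun _ _ => mul_nonneg (hc _ _ _) (hx _ _ _)]
  simp only [Finset.mem_univ, forall_const, Prod.forall]

/-- The expected costs of all players added up, as a bilinear form in the joint cost vector and the
joint distribution; this is the Euclidean inner product of the joint space. -/
noncomputable def jointExpectedCost : (ι → Fin (T + 1) → S → A → ℝ) →L[ℝ]
    StrongDual ℝ (ι → Fin (T + 1) → S → A → ℝ) :=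
  ∑ i, expectedCost.bilinearComp (.proj i) (.proj i)

lemma jointExpectedCost_apply (c x : ι → Fin (T + 1) → S → A → ℝ) :
    jointExpectedCost c x = ∑ i, expectedCost (c i) (x i) := by
  simp [jointExpectedCost]

lemma jointExpectedCost_eq_sum_mul (c x : ι → Fin (T + 1) → S → A → ℝ) :
    jointExpectedCost c x = ∑ i, ∑ t, ∑ s, ∑ a, x i t s a * c i t s a := by
  simp only [jointExpectedCost_apply, expectedCost_apply, mul_comm]

variable [DecidableEq S] [DecidableEq A]

lemma jointExpectedCost_ebN {N : ℕ} (c : Fin N → Fin (T + 1) → S → A → ℝ) (i : Fin N)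
    (t : Fin (T + 1)) (s : S) (a : A) : jointExpectedCost c (ebN N T i t s a) = c i t s a := by
  simp [jointExpectedCost_apply, expectedCost_apply, ebN, eb, ite_and, apply_ite]

lemma jointExpectedCost_symm_of_ebN {N : ℕ}
    {L : (Fin N → Fin (T + 1) → S → A → ℝ) →L[ℝ] (Fin N → Fin (T + 1) → S → A → ℝ)}
    (hL : ∀ i t s a j t' s' a',
      L (ebN N T j t' s' a') i t s a = L (ebN N T i t s a) j t' s' a')
    (v w : Fin N → Fin (T + 1) → S → A → ℝ) :
    jointExpectedCost (L v) w = jointExpectedCost (L w) v := by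
  let B := (jointExpectedCost ∘L L).toLinearMap₁₂
  suffices B = B.flip from congr($this v w)
  ext j t' s' a' i t s a
  simpa [B, ← ebN_eq_single, jointExpectedCost_ebN] using hL i t s a j t' s' a'

end ExpectedCost

section Policy

variable {S A : Type*} [Fintype S] {T : ℕ} {P : Fin (T + 1) → S → S → A → ℝ} {z0 : S → ℝ}

/-- The state distribution over time when play starts from `z0` and follows the deterministic
policy `π`. -/
noncomputable def policyStates (P : Fin (T + 1) → S → S → A → ℝ) (z0 : S → ℝ)
    (π : Fin (T + 1) → S → A) : Fin (T + 1) → S → ℝ :=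
  Fin.induction z0 fun t μ s => ∑ s', P t.succ s s' (π t.castSucc s') * μ s'

lemma policyStates_nonneg (hP : IsKernel T P) (hz0 : ∀ s, 0 ≤ z0 s) (π : Fin (T + 1) → S → A)
    (t : Fin (T + 1)) (s : S) : 0 ≤ policyStates P z0 π t s := by
  induction t using Fin.induction generalizing s with
  | zero => exact hz0 s
  | succ t ih => exact Finset.sum_nonneg fun s' _ => mul_nonneg (hP.1 _ _ _ _) (ih s')

end Policy

section FeasibleSet

variable {S A : Type*} [Fintype S] [Fintype A] {T : ℕ} {P : Fin (T + 1) → S → S → A → ℝ}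
  {z0 : S → ℝ} {x : Fin (T + 1) → S → A → ℝ}

lemma mem_feas_iff : x ∈ Feas T P z0 ↔ (∀ t s a, 0 ≤ x t s a) ∧ (∀ s, ∑ a, x 0 s a = z0 s) ∧
    ∀ (t : Fin T) s, ∑ s', ∑ a, P t.succ s s' a * x t.castSucc s' a = ∑ a, x t.succ s a := by
  simp only [Fin.forall_iff (n := T)]
  rfl

lemma sum_expectation_mul (hx : x ∈ Feas T P z0) (t : Fin T) (V : S → ℝ) :
    ∑ s, ∑ a, (∑ s', P t.succ s' s a * V s') * x t.castSucc s a
      = ∑ s, V s * ∑ a, x t.succ s a := by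
  simp_rw [← (mem_feas_iff.1 hx).2.2 t, Finset.mul_sum, Finset.sum_mul]
  conv_rhs => rw [Finset.sum_comm]; enter [2, s]; rw [Finset.sum_comm]
  simp only [mul_left_comm, mul_assoc]

lemma sum_eq_of_mem_feas (hP : IsKernel T P) (hx : x ∈ Feas T P z0) (t : Fin (T + 1)) :
    ∑ s, ∑ a, x t s a = ∑ s, z0 s := by
  induction t using Fin.induction with
  | zero => exact Finset.sum_congr rfl fun s _ => hx.2.1 s
  | succ t ih =>
    simpa [hP.2 _ t.succ_ne_zero, ih] using (sum_expectation_mul hx t 1).symm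

lemma isClosed_feas : IsClosed (Feas T P z0) := by
  simp only [Feas, Set.ofPred_and, Set.ofPred_forall]
  refine .inter (isClosed_iInter fun t => isClosed_iInter fun s => isClosed_iInter fun a => ?_)
    (.inter (isClosed_iInter fun s => ?_)
      (isClosed_iInter fun t => isClosed_iInter fun ht => isClosed_iInter fun s => ?_))
  · exact isClosed_le (by fun_prop) (by fun_prop)
  · exact isClosed_eq (by fun_prop) (by fun_prop)
  · exact isClosed_eq (by fun_prop) (by fun_prop)

lemma isCompact_feas (hP : IsKernel T P) : IsCompact (Feas T P z0) := by
  have hbox : IsCompact (Set.Icc (0 : Fin (T + 1) → S → A → ℝ) fun _ _ _ => ∑ s, z0 s) :=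
    isCompact_Icc
  refine hbox.of_isClosed_subset isClosed_feas fun x hx => ⟨hx.1, fun t s a => ?_⟩
  calc x t s a ≤ ∑ a, x t s a :=
        Finset.single_le_sum (fun a _ => hx.1 t s a) (Finset.mem_univ a)
    _ ≤ ∑ s, ∑ a, x t s a :=
        Finset.single_le_sum (f := fun s => ∑ a, x t s a)
          (fun s _ => Finset.sum_nonneg fun a _ => hx.1 t s a) (Finset.mem_univ s)
    _ = ∑ s, z0 s := sum_eq_of_mem_feas hP hx t

lemma convex_feas : Convex ℝ (Feas T P z0) := by
  intro x hx y hy p q hp hq hpq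
  rw [mem_feas_iff] at hx hy ⊢
  refine ⟨fun t s a => ?_, fun s => ?_, fun t s => ?_⟩
  · exact add_nonneg (mul_nonneg hp (hx.1 t s a)) (mul_nonneg hq (hy.1 t s a))
  · simp [Finset.sum_add_distrib, ← Finset.mul_sum, hx.2.1, hy.2.1, ← add_mul, hpq]
  · simp [Finset.sum_add_distrib, ← Finset.mul_sum, ← hx.2.2, ← hy.2.2, mul_add, mul_left_comm]

lemma single_policyStates_mem_feas [DecidableEq A] (hP : IsKernel T P) (hz0 : ∀ s, 0 ≤ z0 s)
    (π : Fin (T + 1) → S → A) :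
    (fun t s => Pi.single (π t s) (policyStates P z0 π t s)) ∈ Feas T P z0 := by
  refine mem_feas_iff.2 ⟨fun t s => ?_, fun s => ?_, fun t s => ?_⟩
  · exact (Pi.single_nonneg (α := fun _ => ℝ)).2 (policyStates_nonneg hP hz0 π t s)
  · simp [policyStates]
  · simp [policyStates, Pi.single_apply]

end FeasibleSet

section Bellman

variable {S A : Type*} [Fintype S] [Fintype A] [Nonempty A] {T : ℕ}
  {P : Fin (T + 1) → S → S → A → ℝ} {c : Fin (T + 1) → S → A → ℝ}
  {z0 : S → ℝ} {x : Fin (T + 1) → S → A → ℝ}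

/-- The optimal value function `V(t,s) = min_a Q(t,s,a)`. -/
noncomputable def optimalValue (T : ℕ) (P : Fin (T + 1) → S → S → A → ℝ)
    (c : Fin (T + 1) → S → A → ℝ) (t : Fin (T + 1)) (s : S) : ℝ :=
  Finset.univ.inf' Finset.univ_nonempty (Qval T P c t s)

/-- The advantage `Q - V`: the extra cost of playing `a` in state `s` at time `t` and optimally
afterwards. Since costs are minimised, it is nonnegative. -/
noncomputable def advantage (T : ℕ) (P : Fin (T + 1) → S → S → A → ℝ)
    (c : Fin (T + 1) → S → A → ℝ) (t : Fin (T + 1)) (s : S) (a : A) : ℝ :=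
  Qval T P c t s a - optimalValue T P c t s

lemma advantage_nonneg (t : Fin (T + 1)) (s : S) (a : A) : 0 ≤ advantage T P c t s a :=
  sub_nonneg.2 (Finset.inf'_le _ (Finset.mem_univ a))

lemma exists_advantage_eq_zero (t : Fin (T + 1)) (s : S) : ∃ a, advantage T P c t s a = 0 := by
  obtain ⟨a, -, ha⟩ := Finset.exists_mem_eq_inf' Finset.univ_nonempty (Qval T P c t s)
  exact ⟨a, sub_eq_zero.2 ha.symm⟩

lemma Qval_last (s : S) (a : A) : Qval T P c (Fin.last T) s a = c (Fin.last T) s a := by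
  simp [Qval, Qaux]

lemma Qval_castSucc (t : Fin T) (s : S) (a : A) :
    Qval T P c t.castSucc s a
      = c t.castSucc s a + ∑ s', P t.succ s' s a * optimalValue T P c t.succ s' := by
  have hremaining : T - t.castSucc.1 = T - t.succ.1 + 1 := by
    simp only [Fin.val_castSucc, Fin.val_succ]
    omega
  have hcurrent : (⟨T - (T - t.succ.1 + 1), by omega⟩ : Fin (T + 1)) = t.castSucc := by
    ext
    simp only [Fin.val_castSucc, Fin.val_succ]
    omega
  have hnext : (⟨T - (T - t.succ.1), by omega⟩ : Fin (T + 1)) = t.succ := by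
    ext
    simp only [Fin.val_succ]
    omega
  simp only [optimalValue, Qval, hremaining, Qaux, hcurrent, hnext]

lemma expectedCost_eq_Qval_sub (hx : x ∈ Feas T P z0) :
    expectedCost c x = expectedCost (Qval T P c) x
      - ∑ t : Fin T, ∑ s, optimalValue T P c t.succ s * ∑ a, x t.succ s a := by
  simp only [expectedCost_apply, Fin.sum_univ_castSucc (n := T), Qval_last, Qval_castSucc, add_mul,
    Finset.sum_add_distrib, sum_expectation_mul hx]
  ring

lemma expectedCost_optimalValue (hx : x ∈ Feas T P z0) :
    expectedCost (fun t s _ => optimalValue T P c t s) x = ∑ s, optimalValue T P c 0 s * z0 s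
      + ∑ t : Fin T, ∑ s, optimalValue T P c t.succ s * ∑ a, x t.succ s a := by
  simp only [expectedCost_apply, Fin.sum_univ_succ (n := T), ← Finset.mul_sum, hx.2.1]

lemma expectedCost_eq_add_advantage (hx : x ∈ Feas T P z0) :
    expectedCost c x
      = ∑ s, optimalValue T P c 0 s * z0 s + expectedCost (advantage T P c) x := by
  have hadvantage : advantage T P c = Qval T P c - fun t s _ => optimalValue T P c t s := rfl
  rw [hadvantage, map_sub, sub_apply, expectedCost_optimalValue hx,
    expectedCost_eq_Qval_sub hx]
  ring

lemma bellmanCond_iff_advantage_mul_eq_zero (hx : ∀ t s a, 0 ≤ x t s a) :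
    BellmanCond T P c x ↔ ∀ t s a, advantage T P c t s a * x t s a = 0 := by
  refine forall₃_congr fun t s a => ?_
  rw [(hx t s a).lt_iff_ne', mul_eq_zero, advantage, sub_eq_zero]
  tauto

lemma bellmanCond_iff_expectedCost_advantage_eq_zero (hx : ∀ t s a, 0 ≤ x t s a) :
    BellmanCond T P c x ↔ expectedCost (advantage T P c) x = 0 := by
  rw [bellmanCond_iff_advantage_mul_eq_zero hx, expectedCost_eq_zero_iff advantage_nonneg hx]

lemma exists_mem_feas_bellmanCond (hP : IsKernel T P) (hz0 : ∀ s, 0 ≤ z0 s)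
    (c : Fin (T + 1) → S → A → ℝ) : ∃ x ∈ Feas T P z0, BellmanCond T P c x := by
  classical
  choose π hπ using exists_advantage_eq_zero (T := T) (P := P) (c := c)
  have hmem := single_policyStates_mem_feas hP hz0 π
  refine ⟨_, hmem, (bellmanCond_iff_advantage_mul_eq_zero hmem.1).2 fun t s a => ?_⟩
  obtain rfl | ha := eq_or_ne a (π t s)
  · rw [hπ, zero_mul]
  · rw [Pi.single_eq_of_ne ha, mul_zero]

lemma bellmanCond_iff_isMinOn (hP : IsKernel T P) (hz0 : ∀ s, 0 ≤ z0 s) (hx : x ∈ Feas T P z0) :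
    BellmanCond T P c x ↔ IsMinOn (expectedCost c) (Feas T P z0) x := by
  rw [bellmanCond_iff_expectedCost_advantage_eq_zero hx.1, isMinOn_iff]
  refine ⟨fun hzero y hy => ?_, fun hmin => ?_⟩
  · have hnonneg := expectedCost_nonneg (advantage_nonneg (P := P) (c := c)) hy.1
    rw [expectedCost_eq_add_advantage hx, expectedCost_eq_add_advantage hy]
    linarith
  · obtain ⟨y, hy, hbellman⟩ := exists_mem_feas_bellmanCond hP hz0 c
    have hle := hmin y hy
    rw [expectedCost_eq_add_advantage hx, expectedCost_eq_add_advantage hy,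
      (bellmanCond_iff_expectedCost_advantage_eq_zero hy.1).1 hbellman] at hle
    exact le_antisymm (by linarith) (expectedCost_nonneg advantage_nonneg hx.1)

end Bellman

section JointFeasibleSet

variable {ι S A : Type*} [Fintype S] [Fintype A] {T : ℕ}
  {P : ι → Fin (T + 1) → S → S → A → ℝ} {z0 : ι → S → ℝ}

/-- The set `D = ∏ᵢ 𝒳(Pⁱ, z₀ⁱ)` of feasible joint distributions. -/
def JointFeas (T : ℕ) (P : ι → Fin (T + 1) → S → S → A → ℝ) (z0 : ι → S → ℝ) :
    Set (ι → Fin (T + 1) → S → A → ℝ) :=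
  Set.univ.pi fun i => Feas T (P i) (z0 i)

lemma convex_jointFeas : Convex ℝ (JointFeas T P z0) :=
  convex_pi fun _ _ => convex_feas

lemma isCompact_jointFeas (hP : ∀ i, IsKernel T (P i)) : IsCompact (JointFeas T P z0) :=
  isCompact_univ_pi fun i => isCompact_feas (hP i)

lemma jointFeas_nonempty [Nonempty A] (hP : ∀ i, IsKernel T (P i)) (hz0 : ∀ i s, 0 ≤ z0 i s) :
    (JointFeas T P z0).Nonempty :=
  Set.univ_pi_nonempty_iff.2 fun i =>
    let ⟨x, hx, _⟩ := exists_mem_feas_bellmanCond (hP i) (hz0 i) 0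
    ⟨x, hx⟩

end JointFeasibleSet

lemma nash_iff_isVISolution {ι S A : Type*} [Fintype ι] [Fintype S] [Fintype A] [Nonempty A] {T : ℕ}
    {P : ι → Fin (T + 1) → S → S → A → ℝ} {z0 : ι → S → ℝ}
    {ξ : (ι → Fin (T + 1) → S → A → ℝ) → ι → Fin (T + 1) → S → A → ℝ}
    {x : ι → Fin (T + 1) → S → A → ℝ}
    (hP : ∀ i, IsKernel T (P i)) (hz0 : ∀ i s, 0 ≤ z0 i s) :
    ((∀ i, x i ∈ Feas T (P i) (z0 i)) ∧ ∀ i, BellmanCond T (P i) (ξ x i) (x i)) ↔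
      IsVISolution (JointFeas T P z0) (fun x => jointExpectedCost (ξ x)) x := by
  rw [IsVISolution, JointFeas, ← Set.mem_univ_pi]
  refine and_congr_right fun hx => ?_
  simp only [funext (jointExpectedCost_apply (ξ x))]
  rw [isMinOn_univ_pi_sum_iff hx]
  exact forall_congr' fun i => bellmanCond_iff_isMinOn (hP i) (hz0 i) (hx i (Set.mem_univ i))

theorem stmt19_general {ι S A : Type*} [Fintype ι] [Fintype S] [Fintype A] [Nonempty A] {T : ℕ}
    (P : ι → Fin (T + 1) → S → S → A → ℝ) (hP : ∀ i, IsKernel T (P i))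
    (z0 : ι → S → ℝ) (hz0 : ∀ i s, 0 ≤ z0 i s)
    (ξ : (ι → Fin (T + 1) → S → A → ℝ) → ι → Fin (T + 1) → S → A → ℝ)
    (ξ' : (ι → Fin (T + 1) → S → A → ℝ) →
      (ι → Fin (T + 1) → S → A → ℝ) →L[ℝ] ι → Fin (T + 1) → S → A → ℝ)
    (hξ : ∀ x ∈ JointFeas T P z0, HasFDerivWithinAt ξ (ξ' x) (JointFeas T P z0) x)
    (hsymm : ∀ x ∈ JointFeas T P z0, ∀ v w,
      jointExpectedCost (ξ' x v) w = jointExpectedCost (ξ' x w) v)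
    (hpos : ∀ x ∈ JointFeas T P z0, ∀ v, v ≠ 0 → 0 < jointExpectedCost (ξ' x v) v) :
    ∃! x : ι → Fin (T + 1) → S → A → ℝ,
      (∀ i, x i ∈ Feas T (P i) (z0 i)) ∧ ∀ i, BellmanCond T (P i) (ξ x i) (x i) := by
  simp only [nash_iff_isVISolution hP hz0]
  exact existsUnique_isVISolution (F' := fun x => jointExpectedCost ∘L ξ' x)
    convex_jointFeas (isCompact_jointFeas hP) (jointFeas_nonempty hP hz0)
    (fun x hx => jointExpectedCost.hasFDerivAt.comp_hasFDerivWithinAt x (hξ x hx)) hsymm hpos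

/-- An MDP congestion game with nonempty feasible sets whose cost vector ξ
is C¹ on a convex open set U ⊇ D = ∏ᵢ 𝒳(Pⁱ,z₀ⁱ) with symmetric positive definite
Jacobian on U has exactly one Nash equilibrium. -/
theorem stmt19 {S A : Type*} [Fintype S] [Fintype A] [Nonempty S] [Nonempty A]
    [DecidableEq S] [DecidableEq A] {T N : ℕ}
    (P : Fin N → Fin (T+1) → S → S → A → ℝ) (hP : ∀ i, IsKernel T (P i))
    (z0 : Fin N → S → ℝ) (hz0 : ∀ i s, 0 ≤ z0 i s)
    (hne : ∀ i, (Feas T (P i) (z0 i)).Nonempty)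
    (ξ : (Fin N → Fin (T+1) → S → A → ℝ) → (Fin N → Fin (T+1) → S → A → ℝ))
    (U : Set (Fin N → Fin (T+1) → S → A → ℝ)) (hUopen : IsOpen U) (hUconv : Convex ℝ U)
    (hDU : {x | ∀ i, x i ∈ Feas T (P i) (z0 i)} ⊆ U)
    (hC1 : ContDiffOn ℝ 1 ξ U)
    (hsymm : ∀ x ∈ U, ∀ i t s a, ∀ j t' s' a',
      fderiv ℝ ξ x (ebN N T j t' s' a') i t s a
        = fderiv ℝ ξ x (ebN N T i t s a) j t' s' a')
    (hpd : ∀ x ∈ U, ∀ v : Fin N → Fin (T+1) → S → A → ℝ, v ≠ 0 →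
      0 < ∑ i, ∑ t, ∑ s, ∑ a, v i t s a * fderiv ℝ ξ x v i t s a) :
    ∃! xhat : Fin N → Fin (T+1) → S → A → ℝ,
      (∀ i, xhat i ∈ Feas T (P i) (z0 i)) ∧
      ∀ i, BellmanCond T (P i) (fun t s a => ξ xhat i t s a) (xhat i) := by
  have hD : JointFeas T P z0 ⊆ U := fun x hx => hDU (Set.mem_univ_pi.1 hx)
  exact stmt19_general P hP z0 hz0 ξ (fderiv ℝ ξ)
    (fun x hx => ((hC1.differentiableOn one_ne_zero).differentiableAt
      (hUopen.mem_nhds (hD hx))).hasFDerivAt.hasFDerivWithinAt)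
    (fun x hx => jointExpectedCost_symm_of_ebN (hsymm x (hD hx)))
    fun x hx v hv => (hpd x (hD hx) v hv).trans_eq (jointExpectedCost_eq_sum_mul _ v).symm
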